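/- arXiv:2311.01709 — 4 statements merged into one kernel-verified Lean document; each statement's English description precedes it below -/
import Mathlib

section
/- Let s ≥ 1 and let E = (E₁, …, E_s) be a random vector in ℝ^s whose coordinates are independent standard Gaussian random variables, and let a > 0. Then the conditional covariance matrix of E given the event {‖E‖² ≤ a} equals v_a · I_s, where I_s is the s × s identity matrix and v_a = F_{χ²_{s+2}}(a) / F_{χ²_s}(a). Equivalently: E[E_i E_j · 1{‖E‖² ≤ a}] = 0 for i ≠ j, and E[E_i² | ‖E‖² ≤ a] = F_{χ²_{s+2}}(a) / F_{χ²_s}(a) for every i. -/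
open MeasureTheory ProbabilityTheory

/-- The standard Gaussian measure on `ℝ^s`, with i.i.d. standard Gaussian coordinates. -/
noncomputable def stdGaussianPi (s : ℕ) : Measure (Fin s → ℝ) :=
  Measure.pi fun _ : Fin s => gaussianReal 0 1

/-- The chi-squared distribution with `k` degrees of freedom: the Gamma distribution with
shape `k/2` and rate `1/2`. -/
noncomputable def chiSqMeasure (k : ℕ) : Measure ℝ :=
  gammaMeasure (k / 2 : ℝ) (1 / 2 : ℝ)

/-- The CDF of the chi-squared distribution with `k` degrees of freedom at `a`: the measure it
assigns to `[0, a]`. -/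
noncomputable def chiSqCDF (k : ℕ) (a : ℝ) : ℝ :=
  (chiSqMeasure k (Set.Icc 0 a)).toReal

lemma stdGaussianPi_eq_withDensity (s : ℕ) :
    stdGaussianPi s = (volume : Measure (Fin s → ℝ)).withDensity
      (fun x => ENNReal.ofReal (∏ i, gaussianPDFReal 0 1 (x i))) := by
  unfold stdGaussianPi
  refine Measure.pi_eq fun S hS => ?_
  have hm : MeasurableSet (Set.univ.pi S) := MeasurableSet.univ_pi hS
  rw [withDensity_apply _ hm, ← ofReal_integral_eq_lintegral_ofReal]
  · rw [volume_pi, Measure.restrict_pi_pi,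
      integral_fintype_prod_eq_prod (μ := fun i => volume.restrict (S i))
        (fun _ x => gaussianPDFReal 0 1 x), ENNReal.ofReal_prod_of_nonneg]
    · refine Finset.prod_congr rfl fun i _ => ?_
      rw [gaussianReal_apply_eq_integral _ one_ne_zero]
    · intro i _
      exact integral_nonneg fun x => gaussianPDFReal_nonneg _ _ _
  · refine Integrable.restrict ?_
    exact Integrable.fintype_prod (f := fun _ x => gaussianPDFReal 0 1 x)
      fun i => integrable_gaussianPDFReal 0 1
  · exact Filter.Eventually.of_forall fun x =>
      Finset.prod_nonneg fun i _ => gaussianPDFReal_nonneg _ _ _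

lemma prod_gaussianPDF (s : ℕ) (x : Fin s → ℝ) :
    ∏ i, gaussianPDFReal 0 1 (x i) =
      ((√(2 * Real.pi))⁻¹) ^ s * Real.exp (-(∑ k, (x k) ^ 2) / 2) := by
  simp only [gaussianPDFReal, Finset.prod_mul_distrib, ← Real.exp_sum]
  simp [← Finset.sum_div, Finset.sum_neg_distrib]

lemma integral_radial (s : ℕ) (hs : 1 ≤ s) : ∃ C : ℝ, C ≠ 0 ∧ ∀ h : ℝ → ℝ,
    ∫ x, h (∑ k, (x k) ^ 2) ∂(stdGaussianPi s) =
      C * ∫ r in Set.Ioi (0 : ℝ), r ^ (s - 1) * (Real.exp (-r ^ 2 / 2) * h (r ^ 2)) := by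
  have : Nonempty (Fin s) := ⟨⟨0, hs⟩⟩
  refine ⟨((√(2 * Real.pi))⁻¹) ^ s * (s *
    (volume : Measure (EuclideanSpace ℝ (Fin s))).real (Metric.ball 0 1)), ?_, fun h => ?_⟩
  · have h1 : 0 < (volume : Measure (EuclideanSpace ℝ (Fin s))).real (Metric.ball 0 1) :=
      ENNReal.toReal_pos (Metric.measure_ball_pos _ _ one_pos).ne' measure_ball_lt_top.ne
    have h2 : (0 : ℝ) < s := by exact_mod_cast hs
    have := Real.pi_pos
    positivity
  · rw [stdGaussianPi_eq_withDensity, integral_withDensity_eq_integral_toReal_smul]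
    · have h1 := integral_fun_norm_addHaar (volume : Measure (EuclideanSpace ℝ (Fin s)))
        (fun r => Real.exp (-r ^ 2 / 2) * h (r ^ 2))
      rw [← (PiLp.volume_preserving_toLp (Fin s)).integral_comp
        (MeasurableEquiv.toLp 2 (Fin s → ℝ)).measurableEmbedding] at h1
      simp only [EuclideanSpace.norm_sq_eq, Real.norm_eq_abs, sq_abs, finrank_euclideanSpace,
        Fintype.card_fin, nsmul_eq_mul, smul_eq_mul] at h1
      rw [mul_assoc, mul_assoc, ← h1, ← integral_const_mul]
      refine integral_congr_ae (Filter.Eventually.of_forall fun x => ?_)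
      simp only [smul_eq_mul]
      rw [ENNReal.toReal_ofReal (Finset.prod_nonneg fun i _ => gaussianPDFReal_nonneg _ _ _),
        prod_gaussianPDF]
      ring
    · have : Measurable fun x : Fin s → ℝ => ∏ i, gaussianPDFReal 0 1 (x i) :=
        Finset.measurable_prod _ fun i _ =>
          (measurable_gaussianPDFReal 0 1).comp (measurable_pi_apply i)
      exact this.ennreal_ofReal
    · exact Filter.Eventually.of_forall fun x => ENNReal.ofReal_lt_top

lemma chiSqCDF_eq (k : ℕ) (hk : 1 ≤ k) (a : ℝ) :
    chiSqCDF k a = 2 * ((1 / 2 : ℝ) ^ (k / 2 : ℝ) / Real.Gamma (k / 2 : ℝ)) *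
      ∫ r in Set.Ioi (0 : ℝ), r ^ (k - 1) * (Real.exp (-r ^ 2 / 2) *
        (Set.Iic a).indicator (fun _ => (1 : ℝ)) (r ^ 2)) := by
  have hk' : (0 : ℝ) < k := by exact_mod_cast hk
  unfold chiSqCDF chiSqMeasure gammaMeasure
  rw [withDensity_apply _ measurableSet_Icc]
  unfold gammaPDF
  rw [← integral_eq_lintegral_of_nonneg_ae
    (Filter.Eventually.of_forall fun x => gammaPDFReal_nonneg (by positivity) (by norm_num) x)
    (measurable_gammaPDFReal _ _).aestronglyMeasurable]
  have e1 : ∫ x in Set.Icc 0 a, gammaPDFReal (k / 2 : ℝ) (1 / 2) x =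
      ∫ y in Set.Ioi (0 : ℝ), (Set.Iic a).indicator (gammaPDFReal (k / 2 : ℝ) (1 / 2)) y := by
    rw [setIntegral_indicator measurableSet_Iic, Set.Ioi_inter_Iic, integral_Icc_eq_integral_Ioc]
  rw [e1, ← integral_comp_rpow_Ioi_of_pos (p := 2) (by norm_num), ← integral_const_mul]
  refine setIntegral_congr_fun measurableSet_Ioi fun r hr => ?_
  have hr : 0 < r := hr
  simp only [smul_eq_mul, Real.rpow_two]
  by_cases hra : r ^ 2 ∈ Set.Iic a
  · rw [Set.indicator_of_mem hra, Set.indicator_of_mem hra, gammaPDFReal, if_pos (sq_nonneg r)]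
    have e2 : (r ^ 2) ^ ((k : ℝ) / 2 - 1) * r = r ^ (k - 1) := by
      rw [← Real.rpow_natCast r 2, ← Real.rpow_mul hr.le, ← Real.rpow_natCast r (k - 1),
        ← Real.rpow_add_one hr.ne']
      congr 1
      push_cast [hk]
      ring
    have e3 : r ^ ((2 : ℝ) - 1) = r := by norm_num
    have e4 : -(1 / 2 * r ^ 2) = -r ^ 2 / 2 := by ring
    rw [e3, e4, ← e2]
    ring
  · rw [Set.indicator_of_notMem hra, Set.indicator_of_notMem hra]
    simp

lemma measurableSet_T (s : ℕ) (a : ℝ) : MeasurableSet {x : Fin s → ℝ | ∑ k, (x k) ^ 2 ≤ a} :=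
  measurableSet_le (by fun_prop) measurable_const

/-- For a standard Gaussian vector `E` in `ℝ^s` (`s ≥ 1`) and `a > 0`, the
conditional covariance matrix of `E` given `{‖E‖² ≤ a}` is `v_a · I_s` with
`v_a = F_{χ²_{s+2}}(a) / F_{χ²_s}(a)`: the off-diagonal truncated moments vanish, and the
conditional second moment of every coordinate equals `v_a`. -/
theorem truncated_gaussian_covariance (s : ℕ) (hs : 1 ≤ s) (a : ℝ) (ha : 0 < a) :
    (∀ i j : Fin s, i ≠ j →
      ∫ x in {x : Fin s → ℝ | ∑ k, (x k) ^ 2 ≤ a}, x i * x j ∂(stdGaussianPi s) = 0) ∧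
    (∀ i : Fin s,
      (∫ x in {x : Fin s → ℝ | ∑ k, (x k) ^ 2 ≤ a}, (x i) ^ 2 ∂(stdGaussianPi s)) /
          (stdGaussianPi s {x : Fin s → ℝ | ∑ k, (x k) ^ 2 ≤ a}).toReal =
        chiSqCDF (s + 2) a / chiSqCDF s a) := by
  have : IsProbabilityMeasure (stdGaussianPi s) := by unfold stdGaussianPi; infer_instance
  have hT := measurableSet_T s a
  constructor
  · intro i j hij
    -- reflect the `i`-th coordinate
    let e : (Fin s → ℝ) → (Fin s → ℝ) := fun x k => if k = i then - x k else x k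
    have hem : Measurable e := by
      refine measurable_pi_lambda _ fun k => ?_
      by_cases hk : k = i <;> simp only [e, hk, if_true, if_false] <;> fun_prop
    have hee : ∀ x, e (e x) = x := by
      intro x; funext k; by_cases hk : k = i <;> simp [e, hk]
    let eq : (Fin s → ℝ) ≃ᵐ (Fin s → ℝ) :=
      ⟨⟨e, e, hee, hee⟩, hem, hem⟩
    have hmp : MeasurePreserving e (stdGaussianPi s) (stdGaussianPi s) := by
      unfold stdGaussianPi
      refine measurePreserving_pi (f := fun k (y : ℝ) => if k = i then -y else y) _ _ fun k => ?_
      by_cases hk : k = i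
      · simp only [hk, if_true]
        exact ⟨measurable_neg, by simpa using gaussianReal_map_neg (μ := 0) (v := 1)⟩
      · simp only [hk, if_false]
        exact MeasurePreserving.id _
    have key := hmp.setIntegral_preimage_emb eq.measurableEmbedding (fun x => x i * x j)
      {x : Fin s → ℝ | ∑ k, (x k) ^ 2 ≤ a}
    have hpre : e ⁻¹' {x : Fin s → ℝ | ∑ k, (x k) ^ 2 ≤ a} =
        {x : Fin s → ℝ | ∑ k, (x k) ^ 2 ≤ a} := by
      ext x
      have : ∀ k, (e x k) ^ 2 = (x k) ^ 2 := by
        intro k; by_cases hk : k = i <;> simp [e, hk]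
      simp only [Set.mem_preimage, Set.mem_ofPred_eq, this]
    have hval : ∀ x, e x i * e x j = -(x i * x j) := by
      intro x; simp [e, hij.symm]
    rw [hpre] at key
    simp only [hval, integral_neg] at key
    linarith
  · intro i
    set T := {x : Fin s → ℝ | ∑ k, (x k) ^ 2 ≤ a} with hTdef
    have hsymm : ∀ j, ∫ x in T, (x j) ^ 2 ∂(stdGaussianPi s) =
        ∫ x in T, (x i) ^ 2 ∂(stdGaussianPi s) := by
      intro j
      have hmp : MeasurePreserving (MeasurableEquiv.piCongrLeft (fun _ : Fin s => ℝ)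
          (Equiv.swap i j)) (stdGaussianPi s) (stdGaussianPi s) :=
        measurePreserving_piCongrLeft (fun _ : Fin s => gaussianReal 0 1) (Equiv.swap i j)
      have happ : ∀ (x : Fin s → ℝ) (k : Fin s), MeasurableEquiv.piCongrLeft (fun _ : Fin s => ℝ)
          (Equiv.swap i j) x k = x (Equiv.swap i j k) := by
        intro x k
        have := Equiv.piCongrLeft_apply_apply (fun _ : Fin s => ℝ) (Equiv.swap i j) x
          (Equiv.swap i j k)
        rw [Equiv.swap_apply_self] at this
        simpa [MeasurableEquiv.coe_piCongrLeft] using this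
      have key := hmp.setIntegral_preimage_emb (MeasurableEquiv.measurableEmbedding _)
        (fun x => (x i) ^ 2) T
      have hpre : (MeasurableEquiv.piCongrLeft (fun _ : Fin s => ℝ)
          (Equiv.swap i j)) ⁻¹' T = T := by
        ext x
        simp only [hTdef, Set.mem_preimage, Set.mem_ofPred_eq, happ]
        rw [Equiv.sum_comp (Equiv.swap i j) (fun k => (x k) ^ 2)]
      rw [hpre] at key
      simpa only [happ, Equiv.swap_apply_left] using key
    have hint : ∀ j, Integrable (fun x : Fin s → ℝ => (x j) ^ 2)
        ((stdGaussianPi s).restrict T) := by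
      intro j
      refine Measure.integrableOn_of_bounded (M := a) (measure_ne_top _ _)
        ((measurable_pi_apply j).pow_const 2).aestronglyMeasurable ?_
      refine (ae_restrict_iff' hT).2 (Filter.Eventually.of_forall fun x hx => ?_)
      rw [Real.norm_of_nonneg (sq_nonneg _)]
      exact (Finset.single_le_sum (f := fun k => (x k) ^ 2) (fun k _ => sq_nonneg _)
        (Finset.mem_univ j)).trans hx
    obtain ⟨C, hC, hrad⟩ := integral_radial s hs
    have hnum : (s : ℝ) * ∫ x in T, (x i) ^ 2 ∂(stdGaussianPi s) =
        C * ∫ r in Set.Ioi (0 : ℝ), r ^ (s + 2 - 1) * (Real.exp (-r ^ 2 / 2) *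
          (Set.Iic a).indicator (fun _ => (1 : ℝ)) (r ^ 2)) := by
      have h1 : (s : ℝ) * ∫ x in T, (x i) ^ 2 ∂(stdGaussianPi s) =
          ∫ x in T, ∑ k, (x k) ^ 2 ∂(stdGaussianPi s) := by
        rw [integral_finsetSum _ fun j _ => hint j]
        simp [hsymm]
      rw [h1, ← integral_indicator hT]
      have h2 := hrad ((Set.Iic a).indicator id)
      have h3 : (T.indicator fun x : Fin s → ℝ => ∑ k, (x k) ^ 2) =
          fun x => (Set.Iic a).indicator id (∑ k, (x k) ^ 2) := by
        funext x
        by_cases hx : ∑ k, (x k) ^ 2 ≤ a <;> simp [Set.indicator, hTdef, hx]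
      rw [h3, h2]
      congr 1
      refine setIntegral_congr_fun measurableSet_Ioi fun r _ => ?_
      have e : s + 2 - 1 = (s - 1) + 2 := by omega
      simp only [Set.indicator, id, e, pow_add]
      split_ifs <;> ring
    have hden : (stdGaussianPi s T).toReal =
        C * ∫ r in Set.Ioi (0 : ℝ), r ^ (s - 1) * (Real.exp (-r ^ 2 / 2) *
          (Set.Iic a).indicator (fun _ => (1 : ℝ)) (r ^ 2)) := by
      rw [← hrad]
      have h3 : (fun x : Fin s → ℝ => (Set.Iic a).indicator (fun _ => (1 : ℝ)) (∑ k, (x k) ^ 2))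
          = T.indicator 1 := by
        funext x
        by_cases hx : ∑ k, (x k) ^ 2 ≤ a <;> simp [Set.indicator, hTdef, hx]
      rw [h3, integral_indicator_one hT]
      rfl
    have hs0 : (s : ℝ) ≠ 0 := by exact_mod_cast (by omega : s ≠ 0)
    have hs1 : (0 : ℝ) < s := by exact_mod_cast hs
    rw [chiSqCDF_eq (s + 2) (by omega), chiSqCDF_eq s hs, hden,
      eq_div_of_mul_eq hs0 ((mul_comm _ _).trans hnum)]
    have e1 : ((s + 2 : ℕ) : ℝ) / 2 = s / 2 + 1 := by push_cast; ring
    rw [e1, Real.Gamma_add_one (by positivity), Real.rpow_add_one (by norm_num)]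
    generalize (∫ r in Set.Ioi (0 : ℝ), r ^ (s - 1) * (Real.exp (-r ^ 2 / 2) *
          (Set.Iic a).indicator (fun _ => (1 : ℝ)) (r ^ 2))) = J
    generalize (∫ r in Set.Ioi (0 : ℝ), r ^ (s + 2 - 1) * (Real.exp (-r ^ 2 / 2) *
          (Set.Iic a).indicator (fun _ => (1 : ℝ)) (r ^ 2))) = K
    have hG : Real.Gamma ((s : ℝ) / 2) ≠ 0 := (Real.Gamma_pos_of_pos (by positivity)).ne'
    have hP : ((1 : ℝ) / 2) ^ ((s : ℝ) / 2) ≠ 0 := by positivity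
    by_cases hJ : J = 0
    · simp [hJ]
    · field_simp
end

section
/- Let s ≥ 1 and let Q be a random variable with the chi-squared distribution with s degrees of freedom. Then for every a ≥ 0, the truncated first moment satisfies E[Q · 1{Q ≤ a}] = s · F_{χ²_{s+2}}(a), where F_{χ²_{s+2}} is the cumulative distribution function of the chi-squared distribution with s + 2 degrees of freedom. -/
open MeasureTheory ProbabilityTheory

lemma gammaPDFReal_mul_id (s : ℕ) (hs : 1 ≤ s) (x : ℝ) :
    gammaPDFReal (s / 2 : ℝ) (1 / 2 : ℝ) x * x
      = s * gammaPDFReal (((s + 2 : ℕ) : ℝ) / 2) (1 / 2 : ℝ) x := by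
  have hs0 : (0 : ℝ) < s := by exact_mod_cast hs
  have hp : (0 : ℝ) < s / 2 := by positivity
  have he : (((s + 2 : ℕ) : ℝ) / 2) = s / 2 + 1 := by push_cast; ring
  rw [he]
  unfold gammaPDFReal
  split_ifs with hx
  · have hG := (Real.Gamma_pos_of_pos hp).ne'
    rw [Real.Gamma_add_one hp.ne', Real.rpow_add_one (by norm_num), add_sub_cancel_right]
    have hxp : x ^ ((s : ℝ) / 2) = x ^ ((s : ℝ) / 2 - 1) * x := by
      rcases hx.eq_or_lt with h | h
      · rw [← h, Real.zero_rpow hp.ne', mul_zero]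
      · rw [← Real.rpow_add_one h.ne', sub_add_cancel]
    rw [hxp]
    field_simp
  · simp

/-- If `Q` is a random variable with the chi-squared distribution with `s ≥ 1`
degrees of freedom, then for every `a ≥ 0`,
`E[Q · 1{Q ≤ a}] = s · F_{χ²_{s+2}}(a)`. -/
theorem chiSq_truncated_first_moment {Ω : Type*} [MeasurableSpace Ω] (P : Measure Ω)
    [IsProbabilityMeasure P] (s : ℕ) (hs : 1 ≤ s) (Q : Ω → ℝ) (hQ : Measurable Q)
    (hdist : Measure.map Q P = chiSqMeasure s) (a : ℝ) (ha : 0 ≤ a) :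
    ∫ ω in {ω | Q ω ≤ a}, Q ω ∂P = s * chiSqCDF (s + 2) a := by
  have hs0 : (0 : ℝ) < s := by exact_mod_cast hs
  have h1 : ∫ ω in {ω | Q ω ≤ a}, Q ω ∂P = ∫ x in Set.Iic a, x ∂(Measure.map Q P) :=
    (setIntegral_map (f := fun x : ℝ => x) measurableSet_Iic
      measurable_id.aestronglyMeasurable hQ.aemeasurable).symm
  have hk : (0 : ℝ) < (((s + 2 : ℕ) : ℝ) / 2) := by positivity
  have h2 : chiSqCDF (s + 2) a
      = ∫ x in Set.Icc 0 a, gammaPDFReal (((s + 2 : ℕ) : ℝ) / 2) (1 / 2 : ℝ) x := by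
    rw [chiSqCDF, chiSqMeasure, gammaMeasure, withDensity_apply _ measurableSet_Icc]
    refine (integral_eq_lintegral_of_nonneg_ae ?_ ?_).symm
    · exact ae_of_all _ fun b ↦ gammaPDFReal_nonneg hk (by norm_num) b
    · fun_prop
  have h3 : ∫ x in Set.Icc 0 a, gammaPDFReal (((s + 2 : ℕ) : ℝ) / 2) (1 / 2 : ℝ) x
      = ∫ x in Set.Iic a, gammaPDFReal (((s + 2 : ℕ) : ℝ) / 2) (1 / 2 : ℝ) x := by
    refine (setIntegral_eq_of_subset_of_forall_sdiff_eq_zero measurableSet_Iic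
      (fun x hx => hx.2) ?_).symm
    rintro x ⟨hx, hx'⟩
    have : ¬ 0 ≤ x := fun h => hx' ⟨h, hx⟩
    simp [gammaPDFReal, this]
  rw [h1, hdist, h2, h3, ← integral_const_mul, chiSqMeasure, gammaMeasure,
    setIntegral_withDensity_eq_setIntegral_toReal_smul (f := gammaPDF (s / 2 : ℝ) (1 / 2 : ℝ))
      (measurable_gammaPDFReal _ _).ennreal_ofReal
      (ae_of_all _ fun x => ENNReal.ofReal_lt_top) _ measurableSet_Iic]
  congr 1
  funext x
  rw [← gammaPDFReal_mul_id s hs x, gammaPDF,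
    ENNReal.toReal_ofReal (gammaPDFReal_nonneg (by positivity) (by norm_num) x), smul_eq_mul]
end

section
/- Let s ≥ 1, let p ∈ (0, 1), and let a > 0 be any real number with F_{χ²_s}(a) = p (i.e., a is a p-quantile of the chi-squared distribution with s degrees of freedom). Then F_{χ²_{s+2}}(a) < p. -/
open MeasureTheory ProbabilityTheory

lemma aux_integrable {b : ℝ} (hb : 0 < b) : Integrable (gammaPDFReal b (1/2)) := by
  refine ⟨(measurable_gammaPDFReal b _).aestronglyMeasurable, ?_⟩
  rw [hasFiniteIntegral_iff_ofReal (ae_of_all _ fun x => gammaPDFReal_nonneg hb (by norm_num) x)]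
  have := lintegral_gammaPDF_eq_one hb (show (0:ℝ) < 1/2 by norm_num)
  unfold gammaPDF at this
  rw [this]
  exact ENNReal.one_lt_top

lemma aux_cdf (k : ℕ) (hk : 1 ≤ k) {a : ℝ} (ha : 0 < a) :
    chiSqCDF k a = ∫ x in (0:ℝ)..a, gammaPDFReal (k / 2 : ℝ) (1/2) x := by
  have hb : (0:ℝ) < k / 2 := by
    have : (0:ℝ) < k := by exact_mod_cast hk
    positivity
  rw [intervalIntegral.integral_of_le ha.le, ← integral_Icc_eq_integral_Ioc,
    integral_eq_lintegral_of_nonneg_ae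
      (ae_of_all _ fun x => gammaPDFReal_nonneg hb (by norm_num) x)
      (measurable_gammaPDFReal _ _).aestronglyMeasurable]
  rw [chiSqCDF, chiSqMeasure, gammaMeasure, withDensity_apply _ measurableSet_Icc]
  rfl

lemma aux_deriv {b x : ℝ} (hb : 0 < b) (hx : 0 < x) :
    HasDerivAt (fun x : ℝ => (1/2 : ℝ) ^ b / Real.Gamma (b + 1) * x ^ b * Real.exp (-(1/2 * x)))
      (gammaPDFReal b (1/2) x - gammaPDFReal (b + 1) (1/2) x) x := by
  have h1 := (Real.hasDerivAt_rpow_const (p := b) (Or.inl hx.ne')).const_mul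
    ((1/2 : ℝ) ^ b / Real.Gamma (b + 1))
  have h2 : HasDerivAt (fun x : ℝ => Real.exp (-(1/2 * x)))
      (Real.exp (-(1/2 * x)) * (-(1/2 * 1))) x :=
    (((hasDerivAt_id x).const_mul (1/2 : ℝ)).neg).exp
  refine (h1.mul h2).congr_deriv ?_
  have hG := (Real.Gamma_pos_of_pos hb).ne'
  simp only [gammaPDFReal, if_pos hx.le]
  rw [Real.Gamma_add_one hb.ne', Real.rpow_add_one (by norm_num) b, add_sub_cancel_right]
  field_simp
  ring

/-- If `a > 0` is a `p`-quantile of the chi-squared distribution with `s ≥ 1` degrees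
of freedom, i.e. `F_{χ²_s}(a) = p` with `p ∈ (0,1)`, then `F_{χ²_{s+2}}(a) < p`. -/
theorem chiSqCDF_succ_succ_lt_of_quantile (s : ℕ) (hs : 1 ≤ s) (p : ℝ) (hp : p ∈ Set.Ioo 0 1)
    (a : ℝ) (ha : 0 < a) (hq : chiSqCDF s a = p) :
    chiSqCDF (s + 2) a < p := by
  have hb : (0:ℝ) < s / 2 := by
    have : (0:ℝ) < s := by exact_mod_cast hs
    positivity
  rw [← hq, aux_cdf s hs ha, aux_cdf (s + 2) (by omega) ha]
  have e : (((s + 2 : ℕ) : ℝ) / 2) = s / 2 + 1 := by push_cast; ring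
  rw [e]
  generalize (s / 2 : ℝ) = b at hb
  have i1 := (aux_integrable hb).intervalIntegrable (a := 0) (b := a)
  have i2 := (aux_integrable (b := b + 1) (by linarith)).intervalIntegrable (a := 0) (b := a)
  have key := intervalIntegral.integral_eq_sub_of_hasDerivAt_of_le ha.le
    (f := fun x : ℝ => (1/2 : ℝ) ^ b / Real.Gamma (b + 1) * x ^ b * Real.exp (-(1/2 * x)))
    (by
      apply Continuous.continuousOn
      have := Real.continuous_rpow_const hb.le
      fun_prop)
    (fun x hx => aux_deriv hb hx.1) (i1.sub i2)
  rw [intervalIntegral.integral_sub i1 i2, Real.zero_rpow hb.ne'] at key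
  have hG : 0 < Real.Gamma (b + 1) := Real.Gamma_pos_of_pos (by linarith)
  have : 0 < (1/2 : ℝ) ^ b / Real.Gamma (b + 1) * a ^ b * Real.exp (-(1/2 * a)) := by positivity
  linarith
end

section
/- Consider a probability space carrying a random element X of a measurable space, integrable real random variables Y(0) and Y(1) (the potential outcomes), and a Bernoulli(p) random variable I with p ∈ (0, 1) that is independent of (X, Y(0), Y(1)). Let Y = I·Y(1) + (1 − I)·Y(0), let μ_l = E[Y(l) | σ(X)] for l = 0, 1, and define the influence-function statistic ψ = I(Y − μ₁)/p − (1 − I)(Y − μ₀)/(1 − p) + μ₁ − μ₀. Then E[ψ] = E[Y(1) − Y(0)] = τ, the average treatment effect. -/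
open MeasureTheory ProbabilityTheory

/-- The Bernoulli distribution with parameter `p`, as a measure on `ℝ` giving mass `p` to `1`
and mass `1 - p` to `0`. -/
noncomputable def bernoulliReal (p : ℝ) : Measure ℝ :=
  ENNReal.ofReal p • Measure.dirac 1 + ENNReal.ofReal (1 - p) • Measure.dirac 0

/-- In a randomized experiment with covariate `X`, integrable potential outcomes
`Y(0), Y(1)`, and Bernoulli(`p`) treatment indicator `I` independent of `(X, Y(0), Y(1))`, the
AIPW influence-function statistic
`ψ = I(Y − μ₁)/p − (1 − I)(Y − μ₀)/(1 − p) + μ₁ − μ₀`, built with `Y = I·Y(1) + (1 − I)·Y(0)`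
and `μ_l = E[Y(l) | σ(X)]`, satisfies `E[ψ] = E[Y(1) − Y(0)] = τ`. -/
theorem aipw_unbiased {Ω α : Type*} [MeasurableSpace Ω] [MeasurableSpace α]
    (P : Measure Ω) [IsProbabilityMeasure P]
    (X : Ω → α) (hX : Measurable X)
    (Y0 Y1 : Ω → ℝ) (hY0m : Measurable Y0) (hY1m : Measurable Y1)
    (hY0 : Integrable Y0 P) (hY1 : Integrable Y1 P)
    (I : Ω → ℝ) (hI : Measurable I) (p : ℝ) (hp : p ∈ Set.Ioo (0 : ℝ) 1)
    (hdistI : Measure.map I P = bernoulliReal p)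
    (hindep : IndepFun I (fun ω => (X ω, Y0 ω, Y1 ω)) P)
    (Y : Ω → ℝ) (hY : Y = fun ω => I ω * Y1 ω + (1 - I ω) * Y0 ω)
    (μ0 μ1 : Ω → ℝ)
    (hμ0 : μ0 = P[Y0|MeasurableSpace.comap X ‹MeasurableSpace α›])
    (hμ1 : μ1 = P[Y1|MeasurableSpace.comap X ‹MeasurableSpace α›])
    (ψ : Ω → ℝ)
    (hψ : ψ = fun ω => I ω * (Y ω - μ1 ω) / p - (1 - I ω) * (Y ω - μ0 ω) / (1 - p)
        + μ1 ω - μ0 ω) :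
    ∫ ω, ψ ω ∂P = ∫ ω, (Y1 ω - Y0 ω) ∂P := by
  obtain ⟨hp0, hp1⟩ := hp
  have hm : MeasurableSpace.comap X ‹MeasurableSpace α› ≤ ‹MeasurableSpace Ω› := hX.comap_le
  have hI01 : ∀ᵐ ω ∂P, I ω = 0 ∨ I ω = 1 := by
    have h : ∀ᵐ x ∂(Measure.map I P), x ∈ ({0, 1} : Set ℝ) := by
      rw [hdistI, bernoulliReal, ae_add_measure_iff]
      constructor
      · apply Measure.ae_smul_measure
        rw [ae_dirac_iff (by measurability)]
        simp
      · apply Measure.ae_smul_measure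
        rw [ae_dirac_iff (by measurability)]
        simp
    have h2 := ae_of_ae_map hI.aemeasurable h
    filter_upwards [h2] with ω hω
    simpa using hω
  have hIint : Integrable I P := by
    refine Integrable.of_bound hI.aestronglyMeasurable 1 ?_
    filter_upwards [hI01] with ω hω
    rcases hω with h | h <;> simp [h]
  have i0 : Integrable μ0 P := by rw [hμ0]; exact integrable_condExp
  have i1 : Integrable μ1 P := by rw [hμ1]; exact integrable_condExp
  have e0 : ∫ ω, μ0 ω ∂P = ∫ ω, Y0 ω ∂P := by rw [hμ0]; exact integral_condExp hm
  have e1 : ∫ ω, μ1 ω ∂P = ∫ ω, Y1 ω ∂P := by rw [hμ1]; exact integral_condExp hm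
  have hT : Measurable[MeasurableSpace.comap (fun ω => (X ω, Y0 ω, Y1 ω)) inferInstance]
      (fun ω => (X ω, Y0 ω, Y1 ω)) := comap_measurable _
  have hle : MeasurableSpace.comap X ‹MeasurableSpace α› ≤
      MeasurableSpace.comap (fun ω => (X ω, Y0 ω, Y1 ω)) inferInstance :=
    Measurable.comap_le (measurable_fst.comp hT)
  have key : ∀ Z μ : Ω → ℝ,
      Measurable[MeasurableSpace.comap (fun ω => (X ω, Y0 ω, Y1 ω)) inferInstance] Z →
      Measurable[MeasurableSpace.comap X ‹MeasurableSpace α›] μ →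
      IndepFun I (fun ω => Z ω - μ ω) P := by
    intro Z μ hZ hμ
    rw [IndepFun_iff_Indep] at hindep ⊢
    exact indep_of_indep_of_le_right hindep
      (Measurable.comap_le (hZ.sub (hμ.mono hle le_rfl)))
  have k0 := key Y0 μ0 ((measurable_fst.comp measurable_snd).comp hT)
    (by rw [hμ0]; exact stronglyMeasurable_condExp.measurable)
  have k1 := key Y1 μ1 ((measurable_snd.comp measurable_snd).comp hT)
    (by rw [hμ1]; exact stronglyMeasurable_condExp.measurable)
  have j0 : Integrable (fun ω => Y0 ω - μ0 ω) P := hY0.sub i0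
  have j1 : Integrable (fun ω => Y1 ω - μ1 ω) P := hY1.sub i1
  have z0 : ∫ ω, (Y0 ω - μ0 ω) ∂P = 0 := by rw [integral_sub hY0 i0, e0, sub_self]
  have z1 : ∫ ω, (Y1 ω - μ1 ω) ∂P = 0 := by rw [integral_sub hY1 i1, e1, sub_self]
  have m0 : Integrable (fun ω => I ω * (Y0 ω - μ0 ω)) P := k0.integrable_mul hIint j0
  have m1 : Integrable (fun ω => I ω * (Y1 ω - μ1 ω)) P := k1.integrable_mul hIint j1
  have w0 : ∫ ω, I ω * (Y0 ω - μ0 ω) ∂P = 0 := by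
    rw [k0.integral_fun_mul_eq_mul_integral hIint.1 j0.1, z0, mul_zero]
  have w1 : ∫ ω, I ω * (Y1 ω - μ1 ω) ∂P = 0 := by
    rw [k1.integral_fun_mul_eq_mul_integral hIint.1 j1.1, z1, mul_zero]
  have hae : ψ =ᵐ[P] fun ω => (I ω * (Y1 ω - μ1 ω) / p
      - ((Y0 ω - μ0 ω) - I ω * (Y0 ω - μ0 ω)) / (1 - p)) + (μ1 ω - μ0 ω) := by
    filter_upwards [hI01] with ω hω
    rw [hψ, hY]
    rcases hω with h | h <;> simp only [h] <;> ring
  have a1 : Integrable (fun ω => I ω * (Y1 ω - μ1 ω) / p) P := m1.div_const p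
  have a0 : Integrable (fun ω => ((Y0 ω - μ0 ω) - I ω * (Y0 ω - μ0 ω)) / (1 - p)) P :=
    (j0.sub m0).div_const (1 - p)
  have a2 : Integrable (fun ω => I ω * (Y1 ω - μ1 ω) / p
      - ((Y0 ω - μ0 ω) - I ω * (Y0 ω - μ0 ω)) / (1 - p)) P := a1.sub a0
  have a3 : Integrable (fun ω => μ1 ω - μ0 ω) P := i1.sub i0
  rw [integral_congr_ae hae, integral_add a2 a3, integral_sub a1 a0,
    integral_div, integral_div, integral_sub j0 m0, integral_sub i1 i0,
    integral_sub hY1 hY0, w0, w1, z0, e0, e1]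
  simp
end
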